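/- Let A be a closed subspace of C(ℤ^d) ⊗ ℂ^r invariant under the shift operators and their inverses. Then there exists a finite set {ω(1),...,ω(s)} ⊂ (ℂ\{0})^d such that A is the closed linear span of the vectorial polynomially weighted geometric sequences u_{ω(i),h} : k ↦ ω(i)^k h(k) (h ∈ ℂ[z] ⊗ ℂ^r, 1 ≤ i ≤ s) that belong to A. -/

import Mathlib

/-!
Multi-sequences pair with vectors over the Laurent polynomial ring `R = ℂ[z^±]`, and for the product
topology a closed subspace is recovered from its annihilator (`exists_separating`). Translation
invariance makes `B = A^⊥` an `R`-submodule of `R^r`. Its quotient `R^r / B` has finitely many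
associated primes; by the Nullstellensatz each is contained in the maximal ideal of some point `ω`
of the torus (`exists_character`), and these points are the required set.

To see that they suffice, let `p` annihilate every polynomially weighted geometric sequence in `A`
with base one of these points, and suppose `p ∉ B`. Krull's intersection theorem at the associated
primes (`exists_pow_notMem`) gives a point `ω` with maximal ideal `m` and an `n` such that
`p ∉ B + m^n R^r`, hence a linear functional on `R^r` vanishing on `B` and on `m^n R^r` but not
at `p`. Its sequence of values on monomials lies in `B^⊥ = A` because it kills `B`, and is of the
form `ω^k h(k)` because it kills `m^n R^r`: modulo `m^n` the binomial expansion of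
`z^k = ω^k ∏ (1 + (z_i / ω_i - 1))^{k_i}` is finite, with coefficients polynomial in `k`
(`exists_weight`). This sequence pairs nontrivially with `p`, a contradiction.
-/

/-- `C(ℤ^d) ⊗ ℂ^r`: `ℂ^r`-valued multi-sequences, with the product topology. -/
abbrev MSeq (d r : ℕ) := (Fin d → ℤ) → Fin r → ℂ

/-- The vectorial polynomially weighted geometric sequence `u_{ω,h} : k ↦ ω^k h(k)`. -/
noncomputable def pgSeq (d r : ℕ) (ω : Fin d → ℂ) (h : Fin r → MvPolynomial (Fin d) ℂ) :
    MSeq d r :=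
  fun k t => (∏ i : Fin d, ω i ^ k i) * MvPolynomial.eval (fun i => (k i : ℂ)) (h t)

/-! ### Duality between multi-sequences and Laurent polynomial vectors -/

/-- The Laurent polynomial ring `ℂ[z₁^±, …, z_d^±]`, as the group algebra of `ℤ^d`. -/
abbrev Laurent (d : ℕ) := AddMonoidAlgebra ℂ (Fin d → ℤ)

/-- The duality pairing `⟨p, u⟩ = ∑ₜ ∑ₖ pₜ(k) uₜ(k)` between Laurent polynomial vectors and
multi-sequences, as a linear functional of `p`. -/
noncomputable def seqPairing {d r : ℕ} (u : MSeq d r) : (Fin r → Laurent d) →ₗ[ℂ] ℂ :=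
  ∑ t, (Finsupp.linearCombination ℂ (fun k => u k t)) ∘ₗ
    (AddMonoidAlgebra.coeffLinearEquiv ℂ).toLinearMap ∘ₗ LinearMap.proj t

lemma seqPairing_single {d r : ℕ} (u : MSeq d r) (t : Fin r) (k : Fin d → ℤ) (c : ℂ) :
    seqPairing u (Pi.single t (AddMonoidAlgebra.single k c)) = c * u k t := by
  classical
  rw [seqPairing, LinearMap.sum_apply, Finset.sum_eq_single t]
  · simp
  · intro b _ hb
    simp [hb]
  · simp

lemma seqPairing_ext {d r : ℕ} {f g : (Fin r → Laurent d) →ₗ[ℂ] ℂ}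
    (h : ∀ t k, f (Pi.single t (AddMonoidAlgebra.single k 1)) =
      g (Pi.single t (AddMonoidAlgebra.single k 1))) : f = g := by
  refine LinearMap.pi_ext' fun t => AddMonoidAlgebra.lhom_ext' fun k => LinearMap.ext_ring ?_
  simpa using h t k

/-- Multiplication by a monomial is adjoint to translation. -/
lemma seqPairing_single_smul {d r : ℕ} (u : MSeq d r) (k : Fin d → ℤ) (c : ℂ)
    (p : Fin r → Laurent d) :
    seqPairing u ((AddMonoidAlgebra.single k c : Laurent d) • p) =
      c * seqPairing (fun j => u (k + j)) p := by
  have : (seqPairing u) ∘ₗ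
      (LinearMap.lsmul (Laurent d) (Fin r → Laurent d)
        (AddMonoidAlgebra.single k c)).restrictScalars ℂ =
      c • seqPairing (fun j => u (k + j)) := by
    refine seqPairing_ext fun t j => ?_
    simp only [LinearMap.coe_comp, Function.comp_apply, LinearMap.coe_restrictScalars,
      LinearMap.lsmul_apply, LinearMap.smul_apply, ← Pi.single_smul, smul_eq_mul,
      AddMonoidAlgebra.single_mul_single, seqPairing_single, mul_one, one_mul]
  exact LinearMap.congr_fun this p

/-- Every linear functional on `ℂ[z^±]^r` is the pairing with its sequence of values on
monomials. -/
lemma seqPairing_of_functional {d r : ℕ} (φ : (Fin r → Laurent d) →ₗ[ℂ] ℂ) :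
    seqPairing (fun k t => φ (Pi.single t (AddMonoidAlgebra.single k 1))) = φ :=
  seqPairing_ext fun t k => by rw [seqPairing_single, one_mul]

/-- Invariance under the generating shifts and their inverses gives invariance under all
translations of `ℤ^d`. -/
lemma translate_mem {d r : ℕ} (A : Submodule ℂ (MSeq d r))
    (hA : ∀ (i : Fin d), ∀ u ∈ A,
      (fun k => u (k - Pi.single i 1)) ∈ A ∧ (fun k => u (k + Pi.single i 1)) ∈ A)
    (k : Fin d → ℤ) : ∀ u ∈ A, (fun j => u (k + j)) ∈ A := by
  have hz : ∀ (i : Fin d) (n : ℤ), ∀ u ∈ A, (fun j => u (Pi.single i n + j)) ∈ A := by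
    intro i n
    induction n using Int.induction_on with
    | zero => intro u hu; simpa using hu
    | succ n ih =>
      intro u hu
      have := ih _ (hA i u hu).2
      convert this using 3 with j
      rw [Pi.single_add]; abel
    | pred n ih =>
      intro u hu
      have := ih _ (hA i u hu).1
      convert this using 3 with j
      rw [Pi.single_sub]; abel
  have hs : ∀ s : Finset (Fin d), ∀ u ∈ A, (fun j => u ((∑ i ∈ s, Pi.single i (k i)) + j)) ∈ A := by
    intro s
    induction s using Finset.induction_on with
    | empty => intro u hu; simpa using hu
    | insert a s ha ih =>
      intro u hu
      have := ih _ (hz a (k a) u hu)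
      simpa only [Finset.sum_insert ha, add_assoc] using this
  intro u hu
  have := hs Finset.univ u hu
  rwa [Finset.univ_sum_single] at this

/-- The annihilator `A^⊥` of a translation-invariant space, a submodule of `ℂ[z^±]^r`. -/
noncomputable def annihilatorModule {d r : ℕ} (A : Submodule ℂ (MSeq d r))
    (hA : ∀ k : Fin d → ℤ, ∀ u ∈ A, (fun j => u (k + j)) ∈ A) :
    Submodule (Laurent d) (Fin r → Laurent d) where
  carrier := {p | ∀ u ∈ A, seqPairing u p = 0}
  add_mem' := fun {p q} hp hq u hu => by rw [map_add, hp u hu, hq u hu, add_zero]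
  zero_mem' := fun u _ => map_zero _
  smul_mem' := fun c p hp u hu => by
    induction c using AddMonoidAlgebra.induction_linear with
    | zero => rw [zero_smul, map_zero]
    | add x y hx hy => rw [add_smul, map_add, hx, hy, add_zero]
    | single k c => rw [seqPairing_single_smul, hp _ (hA k u hu), mul_zero]

/-- Bipolar theorem for the product topology: a multi-sequence outside a closed subspace is
separated from it by a Laurent polynomial vector. A neighbourhood of `u` avoiding `A` constrains
only finitely many coordinates, so the separation takes place in a finite-dimensional
restriction. -/
lemma exists_separating {d r : ℕ} (A : Submodule ℂ (MSeq d r))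
    (hA : IsClosed (A : Set (MSeq d r))) (u : MSeq d r) (hu : u ∉ A) :
    ∃ p : Fin r → Laurent d, (∀ v ∈ A, seqPairing v p = 0) ∧ seqPairing u p ≠ 0 := by
  classical
  obtain ⟨I, V, hV, hVA⟩ := isOpen_pi_iff.1 hA.isOpen_compl u hu
  -- restriction to the coordinates in `I`
  let ρ : MSeq d r →ₗ[ℂ] (I → Fin r → ℂ) := LinearMap.funLeft ℂ _ (fun i : I => (i : Fin d → ℤ))
  have hρ : ρ u ∉ A.map ρ := by
    rintro ⟨v, hv, hvu⟩
    refine hVA (fun i hi => ?_) hv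
    have : v i = u i := congrFun hvu ⟨i, hi⟩
    rw [this]
    exact (hV i hi).2
  obtain ⟨f, hfu, hfA⟩ := Submodule.exists_le_ker_of_notMem hρ
  let p : Fin r → Laurent d := ∑ t, ∑ i : I, Pi.single t
    (AddMonoidAlgebra.single (i : Fin d → ℤ) (f (Pi.single i (Pi.single t 1))))
  have hp : ∀ v, seqPairing v p = f (ρ v) := by
    intro v
    have hv : ρ v = ∑ t, ∑ i : I, v i t • Pi.single i (Pi.single t (1 : ℂ)) := by
      ext j s
      simp [ρ, LinearMap.funLeft, Finset.sum_apply, Pi.single_apply]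
    rw [hv]
    simp only [p, map_sum, seqPairing_single, map_smul, smul_eq_mul, mul_comm]
  refine ⟨p, fun v hv => ?_, by rwa [hp]⟩
  rw [hp]
  exact hfA (Submodule.mem_map_of_mem hv)

/-! ### Binomial series with nilpotent variable -/

/-- Truncated binomial series with `u = 1 + x`, `x ^ n = 0`: `u ^ k = ∑_{l < n} (k choose l) x ^ l` for
every integer `k`. -/
lemma zpow_eq_sum_choose {S : Type*} [CommRing S] [Algebra ℂ S] (u : Sˣ) (n : ℕ)
    (hx : ((u : S) - 1) ^ n = 0) (k : ℤ) :
    ((u ^ k : Sˣ) : S) =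
      ∑ l ∈ Finset.range n, Ring.choose (k : ℂ) l • ((u : S) - 1) ^ l := by
  cases n with
  | zero =>
    have : Subsingleton S := subsingleton_of_zero_eq_one (by simpa using hx.symm)
    exact Subsingleton.elim _ _
  | succ n =>
    have step : ∀ c : ℂ, ∑ l ∈ Finset.range (n + 1), Ring.choose (c + 1) l • ((u : S) - 1) ^ l =
        u * ∑ l ∈ Finset.range (n + 1), Ring.choose c l • ((u : S) - 1) ^ l := by
      intro c
      have hu : (u : S) = 1 + ((u : S) - 1) := by ring
      generalize (u : S) - 1 = x at hu hx
      rw [hu, add_mul, one_mul, Finset.sum_range_succ' (fun l => Ring.choose (c + 1) l • x ^ l)]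
      simp only [Ring.choose_succ_succ, add_smul, Finset.sum_add_distrib, Ring.choose_zero_right]
      nth_rw 2 [Finset.sum_range_succ]
      rw [Finset.sum_range_succ' (fun l => Ring.choose c l • x ^ l), mul_add, Finset.mul_sum]
      simp only [mul_smul_comm, ← pow_succ', hx, smul_zero, add_zero, Ring.choose_zero_right]
      abel
    induction k using Int.induction_on with
    | zero =>
      rw [Finset.sum_range_succ', Finset.sum_eq_zero]
      · simp
      · intro l _
        simp [Ring.choose_zero_succ]
    | succ k ih =>
      rw [zpow_add_one, mul_comm, Units.val_mul, ih, ← step]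
      push_cast
      rfl
    | pred k ih =>
      rw [← u.mul_right_inj, ← step, ← Units.val_mul, ← zpow_one_add]
      rw [show 1 + (-(k : ℤ) - 1) = -k by ring, ih]
      push_cast
      simp

/-- `x ↦ (x choose l)` is a polynomial function. -/
lemma exists_polynomial_choose (l : ℕ) :
    ∃ b : Polynomial ℂ, ∀ x, b.eval x = Ring.choose x l := by
  refine ⟨Polynomial.C ((l.factorial : ℂ)⁻¹) * (descPochhammer ℤ l).map (algebraMap ℤ ℂ),
    fun x => ?_⟩
  rw [Polynomial.eval_mul, Polynomial.eval_C, Polynomial.eval_map_algebraMap,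
    Polynomial.aeval_eq_smeval, Ring.descPochhammer_eq_factorial_smul_choose, nsmul_eq_mul,
    inv_mul_cancel_left₀ (Nat.cast_ne_zero.2 l.factorial_ne_zero)]

/-! ### Algebra of the Laurent polynomial ring -/

instance (d : ℕ) : IsNoetherianRing (Laurent d) :=
  Algebra.FiniteType.isNoetherianRing ℂ _

/-- Weak Nullstellensatz: every prime ideal of the Laurent polynomial ring has a zero on the torus,
given here by its evaluation character. -/
lemma exists_character {d : ℕ} (P : Ideal (Laurent d)) (hP : P.IsPrime) :
    ∃ χ : Laurent d →ₐ[ℂ] ℂ, P ≤ RingHom.ker χ := by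
  obtain ⟨m, hm, hPm⟩ := P.exists_le_maximal hP.ne_top
  let _ := Ideal.Quotient.field m
  have : Module.Finite ℂ (Laurent d ⧸ m) := finite_of_finite_type_of_isJacobsonRing _ _
  let e := AlgEquiv.ofBijective (Algebra.ofId ℂ (Laurent d ⧸ m))
    IsAlgClosed.algebraMap_bijective_of_isIntegral
  refine ⟨(e.symm : _ →ₐ[ℂ] ℂ).comp (Ideal.Quotient.mkₐ ℂ m), fun x hx => ?_⟩
  have : Ideal.Quotient.mk m x = 0 := Ideal.Quotient.eq_zero_iff_mem.2 (hPm hx)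
  simp [RingHom.mem_ker, this]

/-- The monomials `z^k`, as units. -/
noncomputable def monomialUnit (d : ℕ) : Multiplicative (Fin d → ℤ) →* (Laurent d)ˣ :=
  (AddMonoidAlgebra.of ℂ (Fin d → ℤ)).toHomUnits

lemma monomialUnit_eq_prod {d : ℕ} (k : Fin d → ℤ) :
    monomialUnit d (.ofAdd k) =
      ∏ i, monomialUnit d (.ofAdd (Pi.single i 1)) ^ k i := by
  conv_lhs => rw [← Finset.univ_sum_single k, ofAdd_sum, map_prod]
  refine Finset.prod_congr rfl fun i _ => ?_
  rw [← map_zpow, ← ofAdd_zsmul, ← Pi.single_smul, smul_eq_mul, mul_one]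

/-- A functional killing a power of the maximal ideal at `ω` is, on monomials, a polynomially
weighted geometric sequence of base `ω`: the binomial series in `z_i / ω_i - 1` terminates. -/
lemma exists_weight {d : ℕ} (χ : Laurent d →ₐ[ℂ] ℂ) (n : ℕ) (g : Laurent d →ₗ[ℂ] ℂ)
    (hg : ∀ x ∈ RingHom.ker χ ^ n, g x = 0) :
    ∃ h : MvPolynomial (Fin d) ℂ, ∀ k : Fin d → ℤ, g (AddMonoidAlgebra.single k 1) =
      (∏ i, χ (AddMonoidAlgebra.single (Pi.single i 1) 1) ^ k i) *
        MvPolynomial.eval (fun i => (k i : ℂ)) h := by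
  classical
  choose b hb using exists_polynomial_choose
  let J : Ideal (Laurent d) := RingHom.ker χ ^ n
  let g' : (Laurent d ⧸ J) →ₗ[ℂ] ℂ := (J.restrictScalars ℂ).liftQ g hg
  have hg' : ∀ x, g' (Ideal.Quotient.mk J x) = g x := fun x => rfl
  let ω : Fin d → ℂˣ := fun i =>
    Units.map (χ : Laurent d →* ℂ) (monomialUnit d (.ofAdd (Pi.single i 1)))
  -- `v i = z_i / ω_i` and its residue class `w i` modulo `J`, so that `w i - 1` is nilpotent
  let v : Fin d → (Laurent d)ˣ := fun i =>
    (Units.map (algebraMap ℂ (Laurent d) : ℂ →* Laurent d) (ω i))⁻¹ *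
      monomialUnit d (.ofAdd (Pi.single i 1))
  let w : Fin d → (Laurent d ⧸ J)ˣ := fun i =>
    Units.map (Ideal.Quotient.mk J : Laurent d →* _) (v i)
  have hw : ∀ i, ((w i : Laurent d ⧸ J) - 1) ^ n = 0 := by
    intro i
    have : (w i : Laurent d ⧸ J) - 1 = Ideal.Quotient.mk J (v i - 1) := by simp [w]
    rw [this, ← map_pow, Ideal.Quotient.eq_zero_iff_mem]
    refine Ideal.pow_mem_pow ?_ n
    rw [RingHom.mem_ker, map_sub, map_one, sub_eq_zero]
    have : Units.map (χ : Laurent d →* ℂ) (v i) = 1 := by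
      simp only [v, map_mul, map_inv]
      rw [inv_mul_eq_one]
      exact Units.ext (χ.commutes _)
    exact congrArg Units.val this
  have hmon : ∀ k : Fin d → ℤ, (AddMonoidAlgebra.single k 1 : Laurent d) =
      (∏ i, (ω i : ℂ) ^ k i) • ((∏ i, v i ^ k i : (Laurent d)ˣ) : Laurent d) := by
    intro k
    let c : ℂˣ →* (Laurent d)ˣ := Units.map (algebraMap ℂ (Laurent d) : ℂ →* Laurent d)
    have h1 : monomialUnit d (.ofAdd k) = c (∏ i, ω i ^ k i) * ∏ i, v i ^ k i := by
      rw [monomialUnit_eq_prod, map_prod, ← Finset.prod_mul_distrib]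
      refine Finset.prod_congr rfl fun i _ => ?_
      rw [map_zpow, ← mul_zpow, mul_inv_cancel_left]
    have h2 := congrArg Units.val h1
    rw [Units.val_mul] at h2
    rw [Algebra.smul_def]
    refine h2.trans ?_
    congr 1
    change algebraMap ℂ (Laurent d) ((∏ i, ω i ^ k i : ℂˣ) : ℂ) = _
    push_cast
    rfl
  let h : MvPolynomial (Fin d) ℂ :=
    ∑ L ∈ Fintype.piFinset (fun _ : Fin d => Finset.range n),
      MvPolynomial.C (g' (∏ i, ((w i : Laurent d ⧸ J) - 1) ^ L i)) *
        ∏ i, (b (L i)).toMvPolynomial i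
  refine ⟨h, fun k => ?_⟩
  rw [hmon, map_smul, smul_eq_mul]
  congr 1
  rw [← hg']
  have : Ideal.Quotient.mk J ((∏ i, v i ^ k i : (Laurent d)ˣ) : Laurent d) =
      ∏ i, ((w i ^ k i : (Laurent d ⧸ J)ˣ) : Laurent d ⧸ J) := by
    rw [← Units.coe_prod]
    simp only [w, ← map_zpow, ← map_prod]
    rfl
  rw [this]
  simp only [zpow_eq_sum_choose _ n (hw _), Finset.prod_univ_sum, h, map_sum, map_mul,
    map_prod, MvPolynomial.eval_C]
  refine Finset.sum_congr rfl fun L _ => ?_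
  rw [Finset.prod_smul, map_smul, smul_eq_mul, mul_comm]
  congr 1
  refine Finset.prod_congr rfl fun i _ => ?_
  simp [hb]

/-! ### Spectral synthesis -/

/-- Krull's intersection theorem at the associated primes: a nonzero element of a finite module
over a Noetherian ring survives modulo a power of every proper ideal above a suitable associated prime. -/
lemma exists_pow_notMem {R M : Type*} [CommRing R] [IsNoetherianRing R] [AddCommGroup M]
    [Module R M] [Module.Finite R M] (x : M) (hx : x ≠ 0) :
    ∃ P ∈ associatedPrimes R M, ∀ m : Ideal R, P ≤ m → m ≠ ⊤ →
      ∃ n : ℕ, x ∉ (m ^ n • ⊤ : Submodule R M) := by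
  obtain ⟨P, hP, hxP⟩ := exists_le_isAssociatedPrime_of_isNoetherianRing R x hx
  refine ⟨P, hP, fun m hPm hm => ?_⟩
  by_contra! hall
  obtain ⟨a, ha⟩ := (m.mem_iInf_smul_pow_eq_bot_iff x).1 (by simpa [Submodule.mem_iInf] using hall)
  -- `1 - a` kills `x`, so it lies in `P ≤ m` together with `a`
  have h1 : 1 - (a : R) ∈ m := hPm <| hxP <| by
    simp [Submodule.mem_colon_singleton, sub_smul, ha]
  exact hm ((Ideal.eq_top_iff_one m).2 (by simpa using m.add_mem h1 a.2))

/-- **Vector-valued Lefranc spectral synthesis.**  If `A` is a closed subspace of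
`C(ℤ^d) ⊗ ℂ^r` invariant under the shift operators `(W_i u)(k) = u(k − e_i)` and their
inverses, then there is a finite set `{ω(1),…,ω(s)} ⊆ (ℂ\{0})^d` such that `A` is the closed
linear span of the vectorial polynomially weighted geometric sequences
`u_{ω(i),h} : k ↦ ω(i)^k h(k)` belonging to `A`. -/
theorem vector_valued_spectral_synthesis (d r : ℕ)
    (A : Submodule ℂ (MSeq d r)) (hAclosed : IsClosed (A : Set (MSeq d r)))
    (hAinv : ∀ (i : Fin d), ∀ u ∈ A,
      (fun k => u (k - Pi.single i 1)) ∈ A ∧ (fun k => u (k + Pi.single i 1)) ∈ A) :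
    ∃ (s : ℕ) (ωf : Fin s → Fin d → ℂ), (∀ i j, ωf i j ≠ 0) ∧
      (A : Set (MSeq d r)) =
        closure ↑(Submodule.span ℂ {u : MSeq d r | u ∈ A ∧
          ∃ (i : Fin s) (h : Fin r → MvPolynomial (Fin d) ℂ), u = pgSeq d r (ωf i) h}) := by
  classical
  let B := annihilatorModule A (translate_mem A hAinv)
  have hB : ∀ p, p ∈ B ↔ ∀ u ∈ A, seqPairing u p = 0 := fun p => Iff.rfl
  let N := (Fin r → Laurent d) ⧸ B
  have hfin : (associatedPrimes (Laurent d) N).Finite := associatedPrimes.finite _ _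
  have : Finite (associatedPrimes (Laurent d) N) := hfin
  obtain ⟨s, ⟨e⟩⟩ := Finite.exists_equiv_fin (associatedPrimes (Laurent d) N)
  choose χ hχ using fun P : associatedPrimes (Laurent d) N =>
    exists_character P.1 (IsAssociatedPrime.isPrime P.2)
  refine ⟨s, fun i j => χ (e.symm i) (AddMonoidAlgebra.single (Pi.single j 1) 1), ?_, ?_⟩
  · intro i j
    exact (Units.map (χ (e.symm i) : Laurent d →* ℂ)
      (monomialUnit d (.ofAdd (Pi.single j 1)))).ne_zero
  set S : Set (MSeq d r) := {u : MSeq d r | u ∈ A ∧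
    ∃ (i : Fin s) (h : Fin r → MvPolynomial (Fin d) ℂ), u = pgSeq d r
      ((fun i j => χ (e.symm i) (AddMonoidAlgebra.single (Pi.single j 1) 1)) i) h} with hS
  have hle : (Submodule.span ℂ S).topologicalClosure ≤ A :=
    Submodule.topologicalClosure_minimal _ (Submodule.span_le.2 fun u hu => hu.1) hAclosed
  rw [← Submodule.topologicalClosure_coe]
  refine congrArg _ (le_antisymm (fun u hu => ?_) hle)
  by_contra hcon
  obtain ⟨p, hpS, hpu⟩ := exists_separating _
    (Submodule.isClosed_topologicalClosure _) u hcon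
  have hpB : p ∉ B := fun hp => hpu ((hB p).1 hp u hu)
  obtain ⟨P, hP, hPm⟩ := exists_pow_notMem (R := Laurent d) (B.mkQ p)
    (by simpa [Submodule.Quotient.mk_eq_zero] using hpB)
  obtain ⟨n, hn⟩ := hPm _ (hχ ⟨P, hP⟩) (RingHom.ker_ne_top _)
  set m := RingHom.ker (χ ⟨P, hP⟩) with hm
  -- a functional on `R^r / B` killing `m ^ n • (R^r / B)` but not the class of `p`
  obtain ⟨f, hfp, hf⟩ := Submodule.exists_le_ker_of_notMem
    (K := ℂ) (p := (m ^ n • ⊤ : Submodule (Laurent d) N).restrictScalars ℂ) (v := B.mkQ p) hn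
  let φ : (Fin r → Laurent d) →ₗ[ℂ] ℂ := f ∘ₗ B.mkQ.restrictScalars ℂ
  have hweight := fun t => exists_weight (χ ⟨P, hP⟩) n
    (φ ∘ₗ LinearMap.single ℂ (fun _ : Fin r => Laurent d) t) (fun x hx => by
      refine hf ?_
      have hx1 : (Pi.single t x : Fin r → Laurent d) = x • Pi.single t 1 := by
        rw [← Pi.single_smul, smul_eq_mul, mul_one]
      simp only [Submodule.restrictScalars_mem, LinearMap.coe_restrictScalars,
        LinearMap.coe_single, hx1, map_smul]
      exact Submodule.smul_mem_smul hx trivial)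
  choose h hh using hweight
  let w : MSeq d r := fun k t => φ (Pi.single t (AddMonoidAlgebra.single k 1))
  have hwφ : seqPairing w = φ := seqPairing_of_functional φ
  -- `w ∈ B^⊥ = A` since `φ` kills `B`
  have hwA : w ∈ A := by
    by_contra hwA
    obtain ⟨q, hqA, hqw⟩ := exists_separating A hAclosed w hwA
    refine hqw ?_
    rw [hwφ]
    have : B.mkQ q = 0 := (Submodule.Quotient.mk_eq_zero B).2 ((hB q).2 hqA)
    simp [φ, this]
  have hwS : w ∈ S := by
    refine ⟨hwA, e ⟨P, hP⟩, h, ?_⟩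
    ext k t
    simpa [pgSeq, w] using hh t k
  refine hfp ?_
  have := hpS w (Submodule.le_topologicalClosure _ (Submodule.subset_span hwS))
  rw [hwφ] at this
  exact this
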